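/- Contour integral evaluation of the SU(2) Haar-measure projection: for complex s, t with 0 < |s|, |t| < 1, (1/(2πi)) ∮_{|z|=1} (dz/z) · (1−z^2) / ((1−tz)^2 (1−t/z)^2 (1−s)(1−s z^2)(1−s/z^2)) = (1 + s t^2) / ((1−s^2)(1−t^2)(1−s t^2)^2). -/

import Mathlib

open Complex

lemma circleInt_inv (B : ℂ → ℂ) :
    (∮ z in C(0, 1), z⁻¹ * B z⁻¹) = ∮ z in C(0, 1), z⁻¹ * B z := by
  have h0 : ∀ θ : ℝ, circleMap 0 1 θ ≠ 0 := fun θ => by simp [circleMap]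
  have hinv : ∀ θ : ℝ, (circleMap 0 1 θ)⁻¹ = circleMap 0 1 (-θ) := fun θ => by
    simp [circleMap, ← Complex.exp_neg]
  have e1 : (∮ z in C(0, 1), z⁻¹ * B z⁻¹)
      = ∫ θ in (0 : ℝ)..(2 * Real.pi), I * B (circleMap 0 1 (-θ)) := by
    unfold circleIntegral
    apply intervalIntegral.integral_congr
    intro θ _
    have := h0 θ
    simp only [deriv_circleMap, smul_eq_mul, ← hinv]
    field_simp
  have e2 : (∮ z in C(0, 1), z⁻¹ * B z)
      = ∫ θ in (0 : ℝ)..(2 * Real.pi), I * B (circleMap 0 1 θ) := by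
    unfold circleIntegral
    apply intervalIntegral.integral_congr
    intro θ _
    have := h0 θ
    simp only [deriv_circleMap, smul_eq_mul]
    field_simp
  rw [e1, e2, intervalIntegral.integral_comp_neg (fun θ : ℝ => I * B (circleMap 0 1 θ))]
  have hp : Function.Periodic (fun θ : ℝ => I * B (circleMap 0 1 θ)) (2 * Real.pi) := fun θ => by
    simp only [periodic_circleMap 0 1 θ]
  have := hp.intervalIntegral_add_eq (-(2 * Real.pi)) 0
  simpa using this

lemma ne_of_norm {a : ℂ} (h : ‖a‖ < 1) : 1 - a ≠ 0 := fun h' => by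
  have : a = 1 := by linear_combination -h'
  simp [this] at h

theorem su2_molien_weyl_integral (s t : ℂ)
    (hs0 : 0 < ‖s‖) (hs1 : ‖s‖ < 1) (ht0 : 0 < ‖t‖) (ht1 : ‖t‖ < 1) :
    (2 * (Real.pi : ℂ) * Complex.I)⁻¹ *
        (∮ z in C(0, 1), z⁻¹ *
          ((1 - z ^ 2) /
            ((1 - t * z) ^ 2 * (1 - t / z) ^ 2 * (1 - s) * (1 - s * z ^ 2) * (1 - s / z ^ 2))))
      = (1 + s * t ^ 2) / ((1 - s ^ 2) * (1 - t ^ 2) * (1 - s * t ^ 2) ^ 2) := by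
  have mlt : ∀ {a b : ℂ}, ‖a‖ < 1 → ‖b‖ ≤ 1 → ‖a * b‖ < 1 := fun {a b} ha hb => by
    rw [norm_mul]; nlinarith [norm_nonneg a, norm_nonneg b]
  have ple : ∀ {b : ℂ}, ‖b‖ ≤ 1 → ‖b ^ 2‖ ≤ 1 := fun {b} hb => by
    rw [norm_pow]; exact pow_le_one₀ (norm_nonneg _) hb
  have k1 : 1 - s ≠ 0 := ne_of_norm hs1
  have k2 : 1 + s ≠ 0 := by simpa using ne_of_norm (a := -s) (by simpa using hs1)
  have k3 : 1 - t ^ 2 ≠ 0 := by rw [pow_two]; exact ne_of_norm (mlt ht1 ht1.le)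
  have k4 : 1 - s * t ^ 2 ≠ 0 := ne_of_norm (mlt hs1 (ple ht1.le))
  have p1 : ∀ {z : ℂ}, ‖z‖ ≤ 1 → 1 - t * z ≠ 0 := fun hz => ne_of_norm (mlt ht1 hz)
  have p2 : ∀ {z : ℂ}, ‖z‖ ≤ 1 → 1 - s * z ^ 2 ≠ 0 := fun hz => ne_of_norm (mlt hs1 (ple hz))
  let a : ℂ → ℂ := fun z => (1 + s * t ^ 2) + (-2 * t - 2 * s * t ^ 3) * z
    + (-1 - s + t ^ 2 - s * t ^ 2 - s ^ 2 * t ^ 2 + s * t ^ 4) * z ^ 2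
    + (2 * s * t ^ 3 + 2 * s ^ 2 * t ^ 3) * z ^ 3
  let b : ℂ → ℂ := fun w => w * ((2 * t + 2 * s * t)
    + (s - t ^ 2 - s * t ^ 2 + s ^ 2 * t ^ 2 - s * t ^ 4 - s ^ 2 * t ^ 4) * w
    + (-2 * s * t - 2 * s ^ 2 * t ^ 3) * w ^ 2 + (s * t ^ 2 + s ^ 2 * t ^ 4) * w ^ 3)
  let P : ℂ → ℂ := fun z => ((1 - t * z) ^ 2 * (1 - s * z ^ 2)) *
    ((1 - s) * (1 + s) * (1 - t ^ 2) * (1 - s * t ^ 2) ^ 2)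
  have hP : ∀ {z : ℂ}, ‖z‖ ≤ 1 → P z ≠ 0 := fun {z} hz => by
    have := p1 hz
    have := p2 hz
    simp only [P]
    positivity
  have hda : DifferentiableOn ℂ (fun z => a z / P z) (Metric.closedBall 0 1) := by
    apply DifferentiableOn.div
    · simp only [a]; fun_prop
    · simp only [P]; fun_prop
    · intro z hz; exact hP (by simpa using hz)
  have hdb : DifferentiableOn ℂ (fun z => b z / P z) (Metric.closedBall 0 1) := by
    apply DifferentiableOn.div
    · simp only [b]; fun_prop
    · simp only [P]; fun_prop
    · intro z hz; exact hP (by simpa using hz)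
  have ia := hda.circleIntegral_sub_inv_smul (w := 0) (by simp)
  have ib := hdb.circleIntegral_sub_inv_smul (w := 0) (by simp)
  simp only [sub_zero, smul_eq_mul] at ia ib
  have ib' := circleInt_inv (fun z => b z / P z)
  rw [ib] at ib'
  have hsph : ∀ {z : ℂ}, z ∈ Metric.sphere (0 : ℂ) 1 → ‖z‖ = 1 := fun hz => by simpa using hz
  have hne : ∀ {z : ℂ}, ‖z‖ = 1 → z ≠ 0 := fun {z} hz h => by simp [h] at hz
  have key : Set.EqOn (fun z : ℂ => z⁻¹ *
          ((1 - z ^ 2) /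
            ((1 - t * z) ^ 2 * (1 - t / z) ^ 2 * (1 - s) * (1 - s * z ^ 2) * (1 - s / z ^ 2))))
      (fun z => z⁻¹ * (a z / P z) + z⁻¹ * (b z⁻¹ / P z⁻¹)) (Metric.sphere 0 1) := by
    intro z hz
    have hz1 := hsph hz
    have hz0 := hne hz1
    have hzi : ‖z⁻¹‖ ≤ 1 := by simp [hz1]
    have q1 := p1 hz1.le
    have q2 := p2 hz1.le
    have q3 : z - t ≠ 0 := fun h => p1 hzi (by field_simp; simpa using h)
    have q4 : z ^ 2 - s ≠ 0 := fun h => p2 hzi (by field_simp; simpa using h)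
    have r3 : 1 - t / z = (z - t) / z := by field_simp
    have r4 : 1 - s / z ^ 2 = (z ^ 2 - s) / z ^ 2 := by field_simp
    have r5 : 1 - t * z⁻¹ = (z - t) / z := by field_simp
    have r6 : 1 - s * z⁻¹ ^ 2 = (z ^ 2 - s) / z ^ 2 := by field_simp
    simp only [a, b, P, r3, r4, r5, r6]
    generalize e1 : 1 - t * z = d1 at *
    generalize e2 : 1 - s * z ^ 2 = d2 at *
    generalize e3 : z - t = d3 at *
    generalize e4 : z ^ 2 - s = d4 at *
    generalize e5 : 1 - t ^ 2 = d5 at *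
    generalize e6 : 1 - s * t ^ 2 = d6 at *
    generalize e7 : 1 - s = d7 at *
    generalize e8 : 1 + s = d8 at *
    field_simp
    subst e1 e2 e3 e4 e5 e6 e7 e8
    ring
  have ca : CircleIntegrable (fun z => z⁻¹ * (a z / P z)) 0 1 := by
    apply ContinuousOn.circleIntegrable zero_le_one
    apply ContinuousOn.mul
    · exact continuousOn_id.inv₀ fun z hz => hne (hsph hz)
    · exact hda.continuousOn.mono Metric.sphere_subset_closedBall
  have cb : CircleIntegrable (fun z => z⁻¹ * (b z⁻¹ / P z⁻¹)) 0 1 := by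
    apply ContinuousOn.circleIntegrable zero_le_one
    have hi : ContinuousOn (fun z : ℂ => z⁻¹) (Metric.sphere 0 1) :=
      continuousOn_id.inv₀ fun z hz => hne (hsph hz)
    apply hi.mul
    exact hdb.continuousOn.comp hi fun z hz => by simp [hsph hz]
  rw [circleIntegral.integral_congr zero_le_one key, circleIntegral.integral_add ca cb, ia, ib']
  have hpi := Complex.two_pi_I_ne_zero
  rw [← mul_add, inv_mul_cancel_left₀ hpi]
  have e : (1 - s ^ 2) = (1 - s) * (1 + s) := by ring
  simp [a, b, P, e]
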